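/- Let N = (S, A, T) be a P/T Petri net and R ⊆ S × S an equivalence relation on places. If (m1 ⊕ m1', m2 ⊕ m2') ∈ R⊕ and (m1, m2) ∈ R⊕, then (m1', m2') ∈ R⊕, i.e., the additive closure of an equivalence relation is subtractive. -/

import Mathlib

/-- A transition of a P/T net: a triple (pre-set, label, post-set). -/
structure PNTrans (S A : Type) where
  pre : Multiset S
  label : A
  post : Multiset S
deriving DecidableEq

/-- A P/T Petri net over places `S` and labels `A`: a finite set of transitions,
each with a nonempty pre-set. -/
structure PetriNet (S A : Type) [DecidableEq S] [DecidableEq A] where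
  T : Finset (PNTrans S A)
  pre_ne : ∀ t ∈ T, t.pre ≠ 0

/-- The additive closure `R⊕` of a place relation `R`: the least relation on markings
containing `(θ, θ)` and closed under adding `R`-related places on both sides. -/
inductive AddClosure {S : Type} (R : S → S → Prop) : Multiset S → Multiset S → Prop
  | zero : AddClosure R 0 0
  | cons {s1 s2 : S} {m1 m2 : Multiset S} :
      R s1 s2 → AddClosure R m1 m2 → AddClosure R (s1 ::ₘ m1) (s2 ::ₘ m2)

/-- The additive closure of an equivalence is equality of the images in the quotient. -/
theorem addClosure_iff_map {S : Type} (r : Setoid S) (m1 m2 : Multiset S) :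
    AddClosure r.r m1 m2 ↔
      m1.map (Quotient.mk r) = m2.map (Quotient.mk r) := by
  constructor
  · intro h
    induction h with
    | zero => rfl
    | cons hs _ ih =>
      rw [Multiset.map_cons, Multiset.map_cons, ih, Quotient.sound hs]
  · intro h
    rw [← Multiset.rel_eq, Multiset.rel_map] at h
    induction h with
    | zero => exact AddClosure.zero
    | cons hs _ ih => exact AddClosure.cons (Quotient.exact hs) ih

/-- the additive closure of an equivalence relation is subtractive. -/
theorem addClosure_sub {S A : Type} [Fintype S] [Fintype A]
    [DecidableEq S] [DecidableEq A] (N : PetriNet S A)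
    (R : S → S → Prop) (hR : Equivalence R) (m1 m2 m1' m2' : Multiset S)
    (h : AddClosure R (m1 + m1') (m2 + m2')) (h' : AddClosure R m1 m2) :
    AddClosure R m1' m2' := by
  have e := addClosure_iff_map ⟨R, hR⟩
  have h1 := (e _ _).1 h
  have h2 := (e _ _).1 h'
  rw [Multiset.map_add, Multiset.map_add, h2] at h1
  exact (e _ _).2 (add_left_cancel h1)
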